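/- Every 2-connected {K_{1,3}, B_{1,2}}-free graph has a Hamiltonian cycle. -/

import Mathlib

open SimpleGraph

def graphOfList (n : ℕ) (E : List (Fin n × Fin n)) : SimpleGraph (Fin n) :=
  SimpleGraph.fromRel (fun a b => (a, b) ∈ E)

/-- The claw `K_{1,3}`, with center `0`. -/
def K13 : SimpleGraph (Fin 4) := graphOfList 4 [(0,1), (0,2), (0,3)]

/-- `B_{1,m} = N_{1,m,0}`: a triangle `0,1,2`, a pendant vertex `3` attached to `0`,
and a path `4,5,…,m+3` of length `m` attached at the vertex `1`. -/
def Bgraph (m : ℕ) : SimpleGraph (Fin (m + 4)) :=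
  SimpleGraph.fromRel (fun a b =>
    (a.val = 0 ∧ b.val = 1) ∨ (a.val = 0 ∧ b.val = 2) ∨ (a.val = 1 ∧ b.val = 2) ∨
    (a.val = 0 ∧ b.val = 3) ∨ (a.val = 1 ∧ b.val = 4) ∨
    (4 ≤ a.val ∧ b.val = a.val + 1))

/-- `G` contains `H` as an induced subgraph. -/
def ContainsInduced {V W : Type*} (G : SimpleGraph V) (H : SimpleGraph W) : Prop :=
  Nonempty (H ↪g G)

/-- A graph is 2-connected if it has at least three vertices and remains connected after
the deletion of any single vertex. -/
def TwoConnected {V : Type*} [Fintype V] (G : SimpleGraph V) : Prop :=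
  3 ≤ Fintype.card V ∧ ∀ v : V, (G.induce ({v}ᶜ : Set V)).Connected

/-- `G` has a Hamiltonian cycle. -/
def HasHamiltonianCycle {V : Type*} [DecidableEq V] (G : SimpleGraph V) : Prop :=
  ∃ (a : V) (p : G.Walk a a), p.IsHamiltonianCycle

/-!
The proof is by induction on the number of vertices. In a 2-connected graph `G`, take a maximal
proper vertex set `S` inducing a 2-connected graph or an edge; a shortest ear of `S`, from `u ∈ S`
through `x, …, y` to `v ∈ S`, then covers all vertices outside `S`. By induction `S` has a
Hamiltonian cycle, so `G` is spanned by the theta graph which the ear forms with the two arcs of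
this cycle between `u` and `v`.

Let the ear have at least two vertices, and suppose that `G` has no Hamiltonian cycle. Rerouting
along the theta and claw-freeness show that `u` and `v` are neither adjacent nor have a common
neighbour in `S`. The first two vertices of the ear therefore continue `S` beyond `u` by a path that
sees none of the first distance layers of `S` around `u`. Now `B_{1,2}`-freeness forces consecutive
layers to be completely joined, claw-freeness makes every layer a clique, and `v` lies in the last
layer because its neighbours in `S` form a clique. Walking through the layers gives a Hamiltonian
path of `S` from `u` to `v`, which the ear closes up.

If the ear is a single vertex `x`, then `u` and `v` turn out to be its only neighbours. If they are
at distance at least four in `S`, the argument applies to the path `x, v`. Otherwise `S` splits into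
three cliques: the private neighbours of `u` together with `u`, those of `v` together with `v`, and
the remaining vertices; these too can be traversed by a path from `u` to `v`.
-/

namespace Bedrossian

variable {V W : Type*} {G : SimpleGraph V} {S T : Set V} {a b c u v w x y z : V}

/-- `G` is `K_{1,3}`-free. -/
def ClawFree (G : SimpleGraph V) : Prop := ¬ ContainsInduced G K13

/-- `G` is `B_{1,2}`-free. -/
def B12Free (G : SimpleGraph V) : Prop := ¬ ContainsInduced G (Bgraph 2)

lemma containsInduced_of_induce {H : SimpleGraph W} (h : ContainsInduced (G.induce S) H) :
    ContainsInduced G H :=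
  h.map (Embedding.induce S).comp

lemma ClawFree.induce (h : ClawFree G) (S : Set V) : ClawFree (G.induce S) :=
  mt containsInduced_of_induce h

lemma B12Free.induce (h : B12Free G) (S : Set V) : B12Free (G.induce S) :=
  mt containsInduced_of_induce h

lemma ClawFree.adj_or_adj_or_adj (h : ClawFree G) (ha : G.Adj u a) (hb : G.Adj u b)
    (hc : G.Adj u c) (hab : a ≠ b) (hac : a ≠ c) (hbc : b ≠ c) :
    G.Adj a b ∨ G.Adj a c ∨ G.Adj b c := by
  by_contra! hn
  have adj_iff (i j : Fin 4) : G.Adj (![u, a, b, c] i) (![u, a, b, c] j) ↔ K13.Adj i j := by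
    fin_cases i <;> fin_cases j <;> simp_all [K13, graphOfList, G.adj_comm]
  have inj : Function.Injective ![u, a, b, c] := by
    intro i j hij
    fin_cases i <;> fin_cases j <;>
      simp_all [ha.ne, hb.ne, hc.ne, ha.ne', hb.ne', hc.ne', eq_comm]
  exact h ⟨⟨⟨_, inj⟩, adj_iff _ _⟩⟩

instance (m : ℕ) : DecidableRel (Bgraph m).Adj := fun i j =>
  decidable_of_iff' _ (fromRel_adj _ i j)

lemma eq_of_forall_Bgraph_two_adj_iff :
    ∀ i j, (∀ k, (Bgraph 2).Adj i k ↔ (Bgraph 2).Adj j k) → i = j := by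
  decide

lemma B12Free.false_of_adj {t₀ t₁ t₂ : V} (h : B12Free G)
    (h₀₁ : G.Adj t₀ t₁) (h₀₂ : G.Adj t₀ t₂) (h₁₂ : G.Adj t₁ t₂) (h₀a : G.Adj t₀ a)
    (h₁b : G.Adj t₁ b) (hbc : G.Adj b c) (n₀b : ¬ G.Adj t₀ b) (n₀c : ¬ G.Adj t₀ c)
    (n₁a : ¬ G.Adj t₁ a) (n₁c : ¬ G.Adj t₁ c) (n₂a : ¬ G.Adj t₂ a) (n₂b : ¬ G.Adj t₂ b)
    (n₂c : ¬ G.Adj t₂ c) (nab : ¬ G.Adj a b) (nac : ¬ G.Adj a c) : False := by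
  have adj_iff (i j : Fin (2 + 4)) :
      G.Adj (![t₀, t₁, t₂, a, b, c] i) (![t₀, t₁, t₂, a, b, c] j) ↔ (Bgraph 2).Adj i j := by
    fin_cases i <;> fin_cases j <;> simp_all [Bgraph, G.adj_comm]
  refine h ⟨⟨⟨_, fun i j hij => eq_of_forall_Bgraph_two_adj_iff i j fun k => ?_⟩, adj_iff _ _⟩⟩
  simp only [← adj_iff]
  exact iff_of_eq (congrArg (G.Adj · _) hij)

/-- The subgraph of `G` induced on `S` has a Hamiltonian path from `u` to `v`. -/
def HasHamiltonianPathOn (G : SimpleGraph V) (S : Set V) (u v : V) : Prop :=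
  ∃ p : G.Walk u v, p.IsPath ∧ ∀ w, w ∈ p.support ↔ w ∈ S

/-- The subgraph of `G` induced on `S` has a Hamiltonian cycle, where an edge traversed back and
forth counts as a cycle on its two ends. -/
def HasHamiltonianCycleOn (G : SimpleGraph V) (S : Set V) : Prop :=
  ∃ (a : V) (c : G.Walk a a), c.support.tail.Nodup ∧ ∀ w, w ∈ c.support.tail ↔ w ∈ S

namespace HasHamiltonianPathOn

lemma singleton (G : SimpleGraph V) (u : V) : HasHamiltonianPathOn G {u} u u :=
  ⟨.nil, .nil, by simp⟩

lemma symm (h : HasHamiltonianPathOn G S u v) : HasHamiltonianPathOn G S v u :=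
  let ⟨p, hp, hS⟩ := h
  ⟨p.reverse, hp.reverse, by simpa using hS⟩

lemma append (h : HasHamiltonianPathOn G S u v) (h' : HasHamiltonianPathOn G T x y)
    (hST : Disjoint S T) (hvx : G.Adj v x) : HasHamiltonianPathOn G (S ∪ T) u y := by
  obtain ⟨p, hp, hS⟩ := h
  obtain ⟨q, hq, hT⟩ := h'
  have hsupp : (p.append (.cons hvx q)).support = p.support ++ q.support := by
    simp [Walk.support_append]
  refine ⟨p.append (.cons hvx q), ?_, by simp [hsupp, hS, hT]⟩
  rw [Walk.isPath_def, hsupp]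
  refine hp.support_nodup.append hq.support_nodup fun w hw hw' => ?_
  exact hST.notMem_of_mem_left ((hS w).1 hw) ((hT w).1 hw')

lemma hasHamiltonianCycleOn (h : HasHamiltonianPathOn G S u v) (hvu : G.Adj v u) :
    HasHamiltonianCycleOn G S := by
  obtain ⟨p, hp, hS⟩ := h
  exact ⟨v, .cons hvu p, by simpa using hp.support_nodup, by simpa using hS⟩

lemma hasHamiltonianCycleOn_univ (h : HasHamiltonianPathOn G S u v)
    (h' : HasHamiltonianPathOn G Sᶜ x y) (hvx : G.Adj v x) (hyu : G.Adj y u) :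
    HasHamiltonianCycleOn G Set.univ := by
  have huy := h.append h' disjoint_compl_right hvx
  rw [Set.union_compl_self] at huy
  exact huy.hasHamiltonianCycleOn hyu

/-- Listing the vertices of `S` by increasing `f` gives the path. -/
lemma of_linearOrder {α : Type*} [LinearOrder α] (f : V → α) (S : Finset V) (hu : u ∈ S)
    (hv : v ∈ S) (huv : u ≠ v) (hmin : ∀ w ∈ S, f u ≤ f w) (hmax : ∀ w ∈ S, f w ≤ f v)
    (hadj : ∀ y ∈ S, ∀ z ∈ S, y ≠ z → f y ≤ f z → (∀ w ∈ S, f w ≤ f y ∨ f z ≤ f w) →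
      G.Adj y z) :
    HasHamiltonianPathOn G S u v := by
  classical
  induction S using Finset.strongInduction generalizing u with
  | H S ih =>
  have hv' : v ∈ S.erase u := Finset.mem_erase.2 ⟨huv.symm, hv⟩
  have split : ∀ w ∈ S, w = u ∨ w ∈ S.erase u := by grind
  suffices h : ∃ x ∈ S.erase u,
      (∀ w ∈ S.erase u, f x ≤ f w) ∧ HasHamiltonianPathOn G (S.erase u : Finset V) x v by
    obtain ⟨x, hx, hxmin, hxv⟩ := h
    have hux : G.Adj u x := by
      refine hadj u hu x (Finset.mem_of_mem_erase hx) (Finset.ne_of_mem_erase hx).symm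
        (hmin x (Finset.mem_of_mem_erase hx)) fun w hw => ?_
      exact (split w hw).imp (fun h : w = u => h ▸ le_rfl) (hxmin w)
    rw [← Finset.insert_erase hu, Finset.coe_insert, ← Set.singleton_union]
    exact (singleton G u).append hxv (by simp) hux
  by_cases hne : ((S.erase u).erase v).Nonempty
  · obtain ⟨x, hx, hxmin⟩ := Finset.exists_min_image _ f hne
    obtain ⟨hxv, hx⟩ := Finset.mem_erase.1 hx
    have hxmin' : ∀ w ∈ S.erase u, f x ≤ f w := fun w hw => by
      by_cases hwv : w = v
      · exact hwv ▸ hmax x (Finset.mem_of_mem_erase hx)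
      · exact hxmin w (Finset.mem_erase.2 ⟨hwv, hw⟩)
    refine ⟨x, hx, hxmin', ih _ (Finset.erase_ssubset hu) hx hv' hxv hxmin'
      (fun w hw => hmax w (Finset.mem_of_mem_erase hw)) fun y hy z hz hyz hle hbetween => ?_⟩
    have hy' := Finset.mem_of_mem_erase hy
    refine hadj y hy' z (Finset.mem_of_mem_erase hz) hyz hle fun w hw => ?_
    exact (split w hw).elim (fun h => .inl (h ▸ hmin y hy')) (hbetween w)
  · have hS : S.erase u = {v} := by
      rw [Finset.not_nonempty_iff_eq_empty, Finset.erase_eq_empty_iff] at hne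
      exact hne.resolve_left (Finset.ne_empty_of_mem hv')
    exact ⟨v, hv', by simp [hS], by simpa [hS] using singleton G v⟩

lemma of_isClique [Finite V] (hS : G.IsClique S) (hu : u ∈ S) (hv : v ∈ S) (huv : u ≠ v) :
    HasHamiltonianPathOn G S u v := by
  have := of_linearOrder (G := G) (fun _ => ()) S.toFinite.toFinset (by simpa using hu)
    (by simpa using hv) huv (by simp) (by simp)
    fun y hy z hz hyz _ _ => hS (by simpa using hy) (by simpa using hz) hyz
  simpa using this

end HasHamiltonianPathOn

namespace HasHamiltonianCycleOn

lemma of_induce (h : HasHamiltonianCycleOn (G.induce S) Set.univ) :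
    HasHamiltonianCycleOn G S := by
  obtain ⟨a, c, hc, hmem⟩ := h
  have hsupp : (c.map (Embedding.induce S).toHom).support.tail = c.support.tail.map (↑) := by
    rw [Walk.support_map, List.map_tail]
    rfl
  have hmem' : ∀ w, w ∈ c.support.tail.map (↑) ↔ w ∈ S := fun w => by
    rw [List.mem_map]
    simp [hmem]
  exact ⟨_, c.map (Embedding.induce S).toHom, hsupp ▸ hc.map Subtype.val_injective, hsupp ▸ hmem'⟩

lemma hasHamiltonianCycle [Fintype V] [DecidableEq V]
    (h : HasHamiltonianCycleOn G Set.univ) (hV : 3 ≤ Fintype.card V) : HasHamiltonianCycle G := by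
  obtain ⟨a, c, hc, hmem⟩ := h
  have hlen : c.length = Fintype.card V := by
    have htoFinset : c.support.tail.toFinset = Finset.univ := by ext w; simp [hmem]
    simpa [List.toFinset_card_of_nodup hc] using congrArg Finset.card htoFinset
  have hnil : ¬ c.Nil := by rw [← Walk.length_eq_zero_iff]; lia
  refine ⟨a, c, Walk.isHamiltonianCycle_iff_isCycle_and_length_eq.2
    ⟨Walk.isCycle_iff_isPath_tail_and_le_length.2 ⟨?_, by lia⟩, hlen⟩⟩
  rwa [Walk.isPath_def, Walk.support_tail_of_not_nil _ hnil]

end HasHamiltonianCycleOn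

/-! ### Rerouting along a theta subgraph -/

/-- The walk that follows `p`, then the edge `h`, then `q`. -/
def link (p : G.Walk u v) (h : G.Adj v x) (q : G.Walk x y) : G.Walk u y := p.append (.cons h q)

@[simp]
lemma support_link (p : G.Walk u v) (h : G.Adj v x) (q : G.Walk x y) :
    (link p h q).support = p.support ++ q.support := by
  simp [link, Walk.support_append]

lemma exists_support_eq_cons (p : G.Walk u v) (huv : u ≠ v) :
    ∃ (n : V) (q : G.Walk n v), G.Adj u n ∧ p.support = u :: q.support := by
  cases p with
  | nil => exact absurd rfl huv
  | cons h q => exact ⟨_, q, h, rfl⟩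

lemma exists_support_eq_concat (p : G.Walk u v) (huv : u ≠ v) :
    ∃ (m : V) (q : G.Walk u m), G.Adj m v ∧ p.support = q.support ++ [v] := by
  obtain ⟨m, q, hvm, hq⟩ := exists_support_eq_cons p.reverse huv.symm
  exact ⟨m, q.reverse, hvm.symm, by simpa using congrArg List.reverse hq⟩

lemma exists_support_eq_append_cons (p : G.Walk u v) (hz : z ∈ p.support) (hzu : z ≠ u)
    (hzv : z ≠ v) :
    ∃ (m n : V) (q : G.Walk u m) (r : G.Walk n v), G.Adj m z ∧ G.Adj z n ∧
      p.support = q.support ++ z :: r.support := by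
  obtain ⟨p₁, p₂, rfl⟩ := Walk.mem_support_iff_exists_append.1 hz
  obtain ⟨m, q, hmz, hq⟩ := exists_support_eq_concat p₁ hzu.symm
  obtain ⟨n, r, hzn, hr⟩ := exists_support_eq_cons p₂ hzv
  exact ⟨m, n, q, r, hmz, hzn, by simp [Walk.support_append, hq, hr]⟩

lemma support_tail_eq_or_exists (p : G.Walk u v) (huv : u ≠ v) :
    p.support.tail = [v] ∨ ∃ (s t : V) (q : G.Walk s t), G.Adj u s ∧ G.Adj t v ∧
      p.support.tail = q.support ++ [v] := by
  cases p with
  | nil => exact absurd rfl huv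
  | cons hs p =>
    cases p with
    | nil => exact .inl rfl
    | cons h p =>
      obtain ⟨t, q, ht, hq⟩ := Walk.exists_cons_eq_concat h p
      exact .inr ⟨_, t, q, hs, ht, by simp [hq, Walk.support_concat]⟩

lemma HasHamiltonianCycleOn.exists_walks (hS : HasHamiltonianCycleOn G S) (hu : u ∈ S)
    (hv : v ∈ S) : ∃ (p : G.Walk u v) (q : G.Walk v u),
      (p.support.tail ++ q.support.tail).Nodup ∧
      ∀ w, w ∈ p.support.tail ++ q.support.tail ↔ w ∈ S := by
  classical
  obtain ⟨a, c, hc, hmem⟩ := hS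
  have huc := List.mem_of_mem_tail ((hmem u).2 hu)
  have hperm := (c.support_rotate u huc).perm
  have hvc := List.mem_of_mem_tail (hperm.mem_iff.2 ((hmem v).2 hv))
  obtain ⟨p, q, hpq⟩ := Walk.mem_support_iff_exists_append.1 hvc
  rw [hpq, Walk.tail_support_append] at hperm
  exact ⟨p, q, hperm.nodup_iff.2 hc, fun w => hperm.mem_iff.trans (hmem w)⟩

lemma HasHamiltonianPathOn.of_support_tail_eq (p : G.Walk u v) (q : G.Walk v u)
    (hp : p.support.tail = [v]) (hnodup : (p.support.tail ++ q.support.tail).Nodup)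
    (hmem : ∀ w, w ∈ p.support.tail ++ q.support.tail ↔ w ∈ S) :
    HasHamiltonianPathOn G S v u := by
  have hq : p.support.tail ++ q.support.tail = q.support := by
    rw [hp, List.singleton_append, q.cons_tail_support]
  exact ⟨q, (Walk.isPath_def q).2 (hq ▸ hnodup), hq ▸ hmem⟩

/-- A spanning theta subgraph of `G`: three disjoint paths `arc₁`, `arc₂` and `ear`, whose first
vertices are adjacent to `u` and whose last vertices are adjacent to `v`, and which together with
`u` and `v` cover every vertex once. -/
structure Theta (G : SimpleGraph V) (u v s₁ t₁ s₂ t₂ x y : V) where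
  arc₁ : G.Walk s₁ t₁
  arc₂ : G.Walk s₂ t₂
  ear : G.Walk x y
  start₁ : G.Adj u s₁
  start₂ : G.Adj u s₂
  start₃ : G.Adj u x
  end₁ : G.Adj t₁ v
  end₂ : G.Adj t₂ v
  end₃ : G.Adj y v
  nodup : (u :: v :: (arc₁.support ++ arc₂.support ++ ear.support)).Nodup
  mem_support : ∀ w, w ∈ u :: v :: (arc₁.support ++ arc₂.support ++ ear.support)

namespace Theta

variable {s₁ t₁ s₂ t₂ : V}

/-- Exchanges the two arcs. -/
def swap (T : Theta G u v s₁ t₁ s₂ t₂ x y) : Theta G u v s₂ t₂ s₁ t₁ x y where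
  arc₁ := T.arc₂
  arc₂ := T.arc₁
  ear := T.ear
  start₁ := T.start₂
  start₂ := T.start₁
  start₃ := T.start₃
  end₁ := T.end₂
  end₂ := T.end₁
  end₃ := T.end₃
  nodup := by have := T.nodup; grind
  mem_support w := by have := T.mem_support w; grind

/-- Exchanges the second arc with the ear. -/
def swapEar (T : Theta G u v s₁ t₁ s₂ t₂ x y) : Theta G u v s₁ t₁ x y s₂ t₂ where
  arc₁ := T.arc₁
  arc₂ := T.ear
  ear := T.arc₂
  start₁ := T.start₁
  start₂ := T.start₃
  start₃ := T.start₂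
  end₁ := T.end₁
  end₂ := T.end₃
  end₃ := T.end₂
  nodup := by have := T.nodup; grind
  mem_support w := by have := T.mem_support w; grind

/-- Exchanges `u` and `v`, reversing the three paths. -/
def flip (T : Theta G u v s₁ t₁ s₂ t₂ x y) : Theta G v u t₁ s₁ t₂ s₂ y x where
  arc₁ := T.arc₁.reverse
  arc₂ := T.arc₂.reverse
  ear := T.ear.reverse
  start₁ := T.end₁.symm
  start₂ := T.end₂.symm
  start₃ := T.end₃.symm
  end₁ := T.start₁.symm
  end₂ := T.start₂.symm
  end₃ := T.start₃.symm
  nodup := by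
    have := T.nodup
    simp only [List.append_assoc, List.nodup_cons, List.mem_cons, List.mem_append, not_or,
      List.nodup_append, Walk.support_reverse, List.mem_reverse, List.nodup_reverse] at *
    grind
  mem_support w := by have := T.mem_support w; grind [Walk.support_reverse]

lemma hasHamiltonianCycleOn_univ [DecidableEq V] (T : Theta G u v s₁ t₁ s₂ t₂ x y)
    (p : G.Walk a b) (hba : G.Adj b a) (hp : ∀ w, p.support.count w =
      (u :: v :: (T.arc₁.support ++ T.arc₂.support ++ T.ear.support)).count w) :
    HasHamiltonianCycleOn G Set.univ := by
  have hperm := List.perm_iff_count.2 hp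
  refine HasHamiltonianPathOn.hasHamiltonianCycleOn ⟨p, ?_, fun w => ?_⟩ hba
  · exact (Walk.isPath_def p).2 (hperm.nodup_iff.2 T.nodup)
  · simpa only [hperm.mem_iff, Set.mem_univ, iff_true] using T.mem_support w

/-- The theta is detached if the first and the last vertex of the ear are adjacent to neither of
the first, respectively last, vertices of the arcs. -/
structure IsDetached (T : Theta G u v s₁ t₁ s₂ t₂ x y) : Prop where
  start₁ : ¬ G.Adj x s₁
  start₂ : ¬ G.Adj x s₂
  end₁ : ¬ G.Adj y t₁
  end₂ : ¬ G.Adj y t₂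

lemma adj_start₂_of_mem_arc₁ (T : Theta G u v s₁ t₁ s₂ t₂ x y) (hcf : ClawFree G)
    (hz : z ∈ T.arc₁.support) (huz : G.Adj u z) (hxz : ¬ G.Adj x z) (hxs : ¬ G.Adj x s₂) :
    G.Adj z s₂ := by
  have hx := T.ear.start_mem_support
  have hs₂ := T.arc₂.start_mem_support
  have hnodup := T.nodup
  rcases hcf.adj_or_adj_or_adj T.start₃ huz T.start₂ (by grind) (by grind) (by grind)
    with h | h | h
  exacts [absurd h hxz, absurd h hxs, h]

namespace IsDetached

variable {T : Theta G u v s₁ t₁ s₂ t₂ x y}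

lemma swap (hT : T.IsDetached) : T.swap.IsDetached :=
  ⟨hT.start₂, hT.start₁, hT.end₂, hT.end₁⟩

lemma flip (hT : T.IsDetached) : T.flip.IsDetached :=
  ⟨hT.end₁, hT.end₂, hT.start₁, hT.start₂⟩

lemma adj_start_start (hT : T.IsDetached) (hcf : ClawFree G) : G.Adj s₁ s₂ :=
  T.adj_start₂_of_mem_arc₁ hcf T.arc₁.start_mem_support T.start₁ hT.start₁ hT.start₂

lemma adj_end_end (hT : T.IsDetached) (hcf : ClawFree G) : G.Adj t₁ t₂ :=
  hT.flip.adj_start_start hcf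

end IsDetached

variable (hG : ¬ HasHamiltonianCycleOn G Set.univ)
include hG

lemma not_adj_start_end (T : Theta G u v s₁ t₁ s₂ t₂ x y) : ¬ G.Adj s₁ t₂ := fun h => by
  classical
  let c := link .nil T.start₃ (link T.ear T.end₃ (link .nil T.end₁.symm
    (link T.arc₁.reverse h T.arc₂.reverse)))
  refine hG (T.hasHamiltonianCycleOn_univ c T.start₂.symm fun w => ?_)
  simp only [c, support_link, Walk.support_nil, Walk.support_reverse, List.count_append,
    List.count_cons, List.count_nil, List.count_reverse]
  lia

lemma not_adj_left_end (T : Theta G u v s₁ t₁ s₂ t₂ x y) (hs : G.Adj s₁ s₂) :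
    ¬ G.Adj u t₂ := fun h => by
  classical
  let c := link .nil h (link T.arc₂.reverse hs.symm (link T.arc₁ T.end₁
    (link .nil T.end₃.symm T.ear.reverse)))
  refine hG (T.hasHamiltonianCycleOn_univ c T.start₃.symm fun w => ?_)
  simp only [c, support_link, Walk.support_nil, Walk.support_reverse, List.count_append,
    List.count_cons, List.count_nil, List.count_reverse]
  lia

lemma not_adj_of_support_arc₁_eq (T : Theta G u v s₁ t₁ s₂ t₂ x y) (hs : G.Adj s₁ s₂)
    (ht : G.Adj t₁ t₂) {m n : V} {q : G.Walk s₁ m} {r : G.Walk n t₁} (hmz : G.Adj m z)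
    (hzn : G.Adj z n) (hqr : T.arc₁.support = q.support ++ z :: r.support) (hvz : G.Adj v z)
    (hzs₂ : G.Adj z s₂) : ¬ G.Adj u m ∧ ¬ G.Adj u n ∧ ¬ G.Adj m n := by
  classical
  refine ⟨fun h => ?_, fun h => ?_, fun h => ?_⟩
  · let c := link .nil hvz.symm (link .nil T.end₃.symm (link T.ear.reverse T.start₃.symm
      (link .nil h (link q.reverse hs (link T.arc₂ ht.symm r.reverse)))))
    refine hG (T.hasHamiltonianCycleOn_univ c hzn.symm fun w => ?_)
    simp only [c, hqr, support_link, Walk.support_nil, Walk.support_reverse, List.count_append,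
      List.count_cons, List.count_nil, List.count_reverse]
    lia
  · let c := link .nil hvz.symm (link .nil T.end₃.symm (link T.ear.reverse T.start₃.symm
      (link .nil h (link r ht (link T.arc₂.reverse hs.symm q)))))
    refine hG (T.hasHamiltonianCycleOn_univ c hmz fun w => ?_)
    simp only [c, hqr, support_link, Walk.support_nil, Walk.support_reverse, List.count_append,
      List.count_cons, List.count_nil, List.count_reverse]
    lia
  · let c := link .nil hvz.symm (link .nil T.end₃.symm (link T.ear.reverse T.start₃.symm
      (link .nil T.start₁ (link q h (link r ht T.arc₂.reverse)))))
    refine hG (T.hasHamiltonianCycleOn_univ c hzs₂.symm fun w => ?_)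
    simp only [c, hqr, support_link, Walk.support_nil, Walk.support_reverse, List.count_append,
      List.count_cons, List.count_nil, List.count_reverse]
    lia

lemma IsDetached.adj_of_mem_arc₁ {T : Theta G u v s₁ t₁ s₂ t₂ x y} (hT : T.IsDetached)
    (hcf : ClawFree G) (hz : z ∈ T.arc₁.support) (huz : G.Adj u z) (hvz : G.Adj v z) :
    G.Adj x z := by
  have hs : G.Adj s₁ s₂ := hT.adj_start_start hcf
  have ht : G.Adj t₁ t₂ := hT.adj_end_end hcf
  have hzs : z ≠ s₁ := by
    rintro rfl
    exact T.swap.flip.not_adj_left_end hG ht.symm hvz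
  have hzt : z ≠ t₁ := by
    rintro rfl
    exact T.swap.not_adj_left_end hG hs.symm huz
  by_contra hxz
  have hzs₂ : G.Adj z s₂ := T.adj_start₂_of_mem_arc₁ hcf hz huz hxz hT.start₂
  obtain ⟨m, n, q, r, hmz, hzn, hqr⟩ := exists_support_eq_append_cons T.arc₁ hz hzs hzt
  obtain ⟨hum, hun, hmn⟩ := T.not_adj_of_support_arc₁_eq hG hs ht hmz hzn hqr hvz hzs₂
  have hm : m ∈ T.arc₁.support := by simp [hqr]
  have hn : n ∈ T.arc₁.support := by simp [hqr]
  have hnodup := T.nodup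
  have hmn_ne : m ≠ n := by
    have := q.end_mem_support
    have := r.start_mem_support
    grind
  rcases hcf.adj_or_adj_or_adj huz.symm hmz.symm hzn (by grind) (by grind) hmn_ne with h | h | h
  exacts [hum h, hun h, hmn h]

lemma IsDetached.adj_of_notMem_ear {T : Theta G u v s₁ t₁ s₂ t₂ x y} (hT : T.IsDetached)
    (hcf : ClawFree G) (hz : z ∉ T.ear.support) (huz : G.Adj u z) (hvz : G.Adj v z) :
    G.Adj x z := by
  have hmem := T.mem_support z
  simp only [List.mem_cons, List.mem_append, huz.ne', hvz.ne', hz, false_or, or_false] at hmem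
  exact hmem.elim (fun h => hT.adj_of_mem_arc₁ hG hcf h huz hvz)
    fun h => hT.swap.adj_of_mem_arc₁ hG hcf h huz hvz

lemma IsDetached.not_adj {T : Theta G u v s₁ t₁ s₂ t₂ x y} (hT : T.IsDetached)
    (hcf : ClawFree G) (hxv : ¬ G.Adj x v) : ¬ G.Adj u v := fun huv => by
  have hs₁v : ¬ G.Adj s₁ v := fun h =>
    T.swap.flip.not_adj_left_end hG (hT.adj_end_end hcf).symm h.symm
  have hx := T.ear.start_mem_support
  have hs₁ := T.arc₁.start_mem_support
  have hnodup := T.nodup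
  rcases hcf.adj_or_adj_or_adj T.start₃ T.start₁ huv (by grind) (by grind) (by grind)
    with h | h | h
  exacts [hT.start₁ h, hxv h, hs₁v h]

lemma exists_of_hasHamiltonianCycleOn (hS : HasHamiltonianCycleOn G S) (hu : u ∈ S) (hv : v ∈ S)
    (huv : u ≠ v) (P : G.Walk x y) (hP : P.IsPath) (hPS : ∀ w, w ∈ P.support ↔ w ∈ Sᶜ)
    (hux : G.Adj u x) (hyv : G.Adj y v) :
    ∃ (s₁ t₁ s₂ t₂ : V) (T : Theta G u v s₁ t₁ s₂ t₂ x y), T.ear = P := by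
  have hPath : HasHamiltonianPathOn G Sᶜ x y := ⟨P, hP, hPS⟩
  obtain ⟨p, q, hnodup, hmem⟩ := hS.exists_walks hu hv
  rcases support_tail_eq_or_exists p huv with hp | ⟨s₁, t₁, r₁, hs₁, ht₁, hp⟩
  · have hvu := HasHamiltonianPathOn.of_support_tail_eq p q hp hnodup hmem
    exact absurd (hvu.hasHamiltonianCycleOn_univ hPath hux hyv) hG
  rcases support_tail_eq_or_exists q huv.symm with hq | ⟨t₂, s₂, r₂, ht₂, hs₂, hq⟩
  · have huv := HasHamiltonianPathOn.of_support_tail_eq q p hq (List.nodup_append_comm.1 hnodup)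
      fun w => List.perm_append_comm.mem_iff.trans (hmem w)
    exact absurd (huv.symm.hasHamiltonianCycleOn_univ hPath hux hyv) hG
  rw [hp, hq] at hnodup hmem
  refine ⟨s₁, t₁, s₂, t₂, ⟨r₁, r₂.reverse, P, hs₁, hs₂.symm, hux, ht₁, ht₂.symm, hyv,
    ?_, fun w => ?_⟩, rfl⟩
  · have hPnodup := hP.support_nodup
    simp only [List.append_assoc, List.cons_append, List.nil_append, List.mem_append,
      List.mem_cons, Walk.support_reverse, List.nodup_cons, List.mem_reverse, not_or] at *
    grind
  · simp only [Set.mem_compl_iff, List.append_assoc, List.cons_append, List.nil_append,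
      List.mem_append, List.mem_cons, Walk.support_reverse, List.mem_reverse] at *
    grind

end Theta

/-! ### Distance layers -/

lemma HasHamiltonianPathOn.map {H : SimpleGraph W} {u v : W}
    (h : HasHamiltonianPathOn H Set.univ u v) (f : H ↪g G) :
    HasHamiltonianPathOn G (Set.range f) (f u) (f v) := by
  obtain ⟨p, hp, hmem⟩ := h
  exact ⟨p.map f.toHom, hp.map f.injective, fun w => by simp [Walk.support_map, hmem]⟩

lemma exists_adj_of_dist_eq_succ {H : SimpleGraph W} {u v : W} {k : ℕ}
    (h : H.dist u v = k + 1) : ∃ w, H.Adj w v ∧ H.dist u w = k := by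
  have hr : H.Reachable v u := (Reachable.of_dist_ne_zero (by lia : H.dist u v ≠ 0)).symm
  obtain ⟨p, hp⟩ := hr.exists_walk_length_eq_dist
  rw [dist_comm, h] at hp
  cases p with
  | nil => simp at hp
  | cons hvw q =>
    have hq := dist_le q.reverse
    have hw := hvw.symm.diff_dist_adj (u := u)
    rw [Walk.length_cons] at hp
    rw [Walk.length_reverse] at hq
    exact ⟨_, hvw.symm, by lia⟩

/-- The distance from `u` to `y` in the subgraph of `G` induced on `S`. -/
noncomputable abbrev level (G : SimpleGraph V) {S : Set V} (u y : S) : ℕ := (G.induce S).dist u y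

/-- The path `u, x₁, x₂` is a tail of `S` at `u ∈ S`: apart from the edge from `x₁` to `u`, it is
not joined to the first few distance layers of `S` around `u`. -/
structure IsTail (G : SimpleGraph V) (S : Set V) (u : S) (x₁ x₂ : V) : Prop where
  notMem : x₁ ∉ S
  adj_start : G.Adj u x₁
  adj : G.Adj x₁ x₂
  not_adj_fst : ∀ y : S, 1 ≤ level G u y → level G u y ≤ 3 → ¬ G.Adj x₁ y
  not_adj_snd : ∀ y : S, level G u y ≤ 2 → ¬ G.Adj x₂ y

lemma adj_of_level_eq_one {u y : S} (h : level G u y = 1) : G.Adj u y :=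
  dist_eq_one_iff_adj (G := G.induce S).1 h

lemma not_adj_of_level_add_one_lt (u : S) {y z : S}
    (h : level G u y + 1 < level G u z) : ¬ G.Adj y z := fun hyz => by
  have := Adj.diff_dist_adj (G := G.induce S) (u := u) (v := y) (w := z) hyz
  lia

namespace IsTail

variable {u v y z : S} {x₁ x₂ : V} {k : ℕ}

lemma exists_path (h : IsTail G S u x₁ x₂) (hS : (G.induce S).Connected) (b : S) :
    ∃ b' b'' : V, G.Adj b b' ∧ G.Adj b' b'' ∧ ∀ y : S,
      level G u b ≤ level G u y →
      level G u y ≤ level G u b + 2 →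
      (level G u b < level G u y → ¬ G.Adj b' y) ∧ ¬ G.Adj b'' y := by
  obtain hb | ⟨j, hb⟩ : level G u b = 0 ∨ ∃ j, level G u b = j + 1 := by
    cases level G u b <;> simp
  · obtain rfl := hS.dist_eq_zero_iff.1 hb
    rw [hb]
    exact ⟨x₁, x₂, h.adj_start, h.adj, fun y _ hy =>
      ⟨fun hy' => h.not_adj_fst y (by lia) (by lia), h.not_adj_snd y (by lia)⟩⟩
  obtain ⟨b', hb', hdb'⟩ := exists_adj_of_dist_eq_succ hb
  have not_adj_b' : ∀ y : S, level G u b < level G u y → ¬ G.Adj b' y :=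
    fun y hy => not_adj_of_level_add_one_lt u (by lia)
  cases j with
  | zero =>
    obtain rfl := hS.dist_eq_zero_iff.1 hdb'
    exact ⟨u, x₁, hb'.symm, h.adj_start, fun y hy hy' =>
      ⟨not_adj_b' y, h.not_adj_fst y (by lia) (by lia)⟩⟩
  | succ j =>
    obtain ⟨b'', hb'', hdb''⟩ := exists_adj_of_dist_eq_succ hdb'
    exact ⟨b', b'', hb'.symm, hb''.symm, fun y hy _ =>
      ⟨not_adj_b' y, not_adj_of_level_add_one_lt u (by lia)⟩⟩

lemma isClique_level_one (h : IsTail G S u x₁ x₂) (hcf : ClawFree G) :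
    (G.induce S).IsClique {y | level G u y = 1} := fun y hy z hz hyz => by
  have hx₁ (y : S) : x₁ ≠ y := fun hy => h.notMem (hy ▸ y.2)
  rcases hcf.adj_or_adj_or_adj h.adj_start (adj_of_level_eq_one hy) (adj_of_level_eq_one hz)
    (hx₁ y) (hx₁ z) (Subtype.coe_injective.ne hyz) with hadj | hadj | hadj
  · exact absurd hadj (h.not_adj_fst y (le_of_eq hy.symm) (by grind))
  · exact absurd hadj (h.not_adj_fst z (le_of_eq hz.symm) (by grind))
  · exact hadj

lemma isClique_level_add_two (hcf : ClawFree G)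
    (hcomplete : ∀ y z, level G u y = k + 1 → level G u z = k + 2 → G.Adj y z) :
    (G.induce S).IsClique {y | level G u y = k + 2} := fun y hy z hz hyz => by
  obtain ⟨p, -, hp⟩ := exists_adj_of_dist_eq_succ hy
  obtain ⟨q, hqp, hq⟩ := exists_adj_of_dist_eq_succ hp
  have not_adj {y : S} (hy : level G u y = k + 2) : ¬ G.Adj q y :=
    not_adj_of_level_add_one_lt u (by lia)
  have hne {y : S} (hy : level G u y = k + 2) : (q : V) ≠ y := fun h => by
    rw [← Subtype.ext h] at hy
    lia
  rcases hcf.adj_or_adj_or_adj hqp.symm (hcomplete p y hp hy) (hcomplete p z hp hz)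
    (hne hy) (hne hz) (Subtype.coe_injective.ne hyz) with hadj | hadj | hadj
  exacts [absurd hadj (not_adj hy), absurd hadj (not_adj hz), hadj]

lemma adj_of_level_eq_succ (h : IsTail G S u x₁ x₂) (hS : (G.induce S).Connected) (hB : B12Free G)
    (hclique : (G.induce S).IsClique {y | level G u y = k + 1})
    (hcomplete : ∀ y z, level G u y = k → level G u z = k + 1 → G.Adj y z)
    (hy : level G u y = k + 1) (hz : level G u z = k + 2) : G.Adj y z := by
  obtain ⟨p, hpz, hp⟩ := exists_adj_of_dist_eq_succ hz
  obtain ⟨b, -, hb⟩ := exists_adj_of_dist_eq_succ hy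
  obtain ⟨b', b'', hbb', hb'b'', hnot⟩ := h.exists_path hS b
  have hnot_b' : ∀ y : S, level G u y = k + 1 ∨ level G u y = k + 2 → ¬ G.Adj y b' :=
    fun y hy hyb' => (hnot y (by lia) (by lia)).1 (by lia) hyb'.symm
  have hnot_b'' : ∀ y : S, k ≤ level G u y → level G u y ≤ k + 2 → ¬ G.Adj y b'' :=
    fun y hy hy' hyb'' => (hnot y (by lia) (by lia)).2 hyb''.symm
  by_contra hyz
  have hyp : p ≠ y := by
    rintro rfl
    exact hyz hpz
  -- `p`, `b`, `y` is a triangle with the pendant edge `p z` and the path `b`, `b'`, `b''`.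
  exact hB.false_of_adj (hcomplete b p hb hp).symm (hclique hp hy hyp) (hcomplete b y hb hy)
    hpz hbb' hb'b'' (hnot_b' p (.inl hp)) (hnot_b'' p (by lia) (by lia))
    (not_adj_of_level_add_one_lt u (by lia)) (hnot_b'' b (by lia) (by lia)) hyz
    (hnot_b' y (.inl hy)) (hnot_b'' y (by lia) (by lia)) (hnot_b' z (.inr hz))
    (hnot_b'' z (by lia) (by lia))

lemma isClique_and_adj (h : IsTail G S u x₁ x₂) (hS : (G.induce S).Connected) (hcf : ClawFree G)
    (hB : B12Free G) (k : ℕ) :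
    (G.induce S).IsClique {y | level G u y = k} ∧
      ∀ y z, level G u y = k → level G u z = k + 1 → G.Adj y z := by
  induction k with
  | zero =>
    refine ⟨fun y hy z hz hyz => absurd ?_ hyz, fun y z hy hz => ?_⟩
    · exact (hS.dist_eq_zero_iff.1 hy).symm.trans (hS.dist_eq_zero_iff.1 hz)
    · obtain rfl := hS.dist_eq_zero_iff.1 hy
      exact adj_of_level_eq_one hz
  | succ k ih =>
    suffices hclique : (G.induce S).IsClique {y | level G u y = k + 1} from
      ⟨hclique, fun y z => h.adj_of_level_eq_succ hS hB hclique ih.2⟩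
    cases k with
    | zero => exact h.isClique_level_one hcf
    | succ k => exact isClique_level_add_two hcf ih.2

lemma level_le_of_isClique (h : IsTail G S u x₁ x₂) (hS : (G.induce S).Connected)
    (hcf : ClawFree G) (hB : B12Free G) (huv : u ≠ v)
    (hv : G.IsClique {w | w ∈ S ∧ G.Adj v w}) (y : S) :
    level G u y ≤ level G u v := by
  obtain ⟨k, hk⟩ := Nat.exists_eq_add_one.2 (hS.pos_dist_of_ne huv)
  obtain ⟨p, hpv, hp⟩ := exists_adj_of_dist_eq_succ hk
  suffices hlt : ∀ j (y : S), level G u y ≠ k + 2 + j by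
    by_contra! hy
    exact hlt _ y (by lia : _ = k + 2 + (level G u y - (k + 2)))
  intro j
  induction j with
  | zero =>
    intro y hy
    have hpy : ¬ G.Adj p y := not_adj_of_level_add_one_lt u (by lia)
    have hvy : G.Adj v y := (h.isClique_and_adj hS hcf hB _).2 v y hk hy
    refine hpy (hv ⟨p.2, hpv.symm⟩ ⟨y.2, hvy⟩ fun heq => ?_)
    rw [Subtype.ext heq] at hp
    lia
  | succ j ih =>
    intro y hy
    obtain ⟨p, -, hp⟩ := exists_adj_of_dist_eq_succ hy
    exact ih p hp

lemma hasHamiltonianPathOn [Finite V] (h : IsTail G S u x₁ x₂) (hS : (G.induce S).Connected)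
    (hcf : ClawFree G) (hB : B12Free G) (huv : u ≠ v)
    (hv : G.IsClique {w | w ∈ S ∧ G.Adj v w}) : HasHamiltonianPathOn G S u v := by
  classical
  have := Fintype.ofFinite S
  have hlayers := h.isClique_and_adj hS hcf hB
  have hpath : HasHamiltonianPathOn (G.induce S) (Finset.univ : Finset S) u v := by
    refine .of_linearOrder (level G u) _ (by simp) (by simp) huv (by simp)
      (fun y _ => h.level_le_of_isClique hS hcf hB huv hv y) fun y _ z _ hyz hle hbetween => ?_
    obtain hdist | hdist : level G u z = level G u y ∨
        level G u z = level G u y + 1 := by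
      by_contra! hdist
      obtain ⟨k, hk⟩ : ∃ k, level G u z = k + 1 := ⟨level G u z - 1, by lia⟩
      obtain ⟨w, -, hw⟩ := exists_adj_of_dist_eq_succ hk
      have := hbetween w (by simp)
      lia
    exacts [(hlayers _).1 rfl hdist hyz, (hlayers _).2 y z rfl hdist]
  rw [Finset.coe_univ] at hpath
  have hmap := hpath.map (Embedding.induce S)
  rwa [show Set.range (Embedding.induce (G := G) S) = S from Subtype.range_coe] at hmap

end IsTail

/-! ### Shortest ears -/

/-- The subgraph of `G` induced on `S` has at least two vertices, is connected and has no cut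
vertex. -/
structure IsNonseparable (G : SimpleGraph V) (S : Set V) : Prop where
  connected : (G.induce S).Connected
  connected_diff : ∀ w, (G.induce (S \ {w})).Connected

lemma exists_adj_of_connected_induce {A : Set V} (hT : (G.induce T).Connected) (ha : a ∈ T)
    (haA : a ∈ A) (hb : b ∈ T) (hbA : b ∉ A) :
    ∃ p ∈ T, p ∈ A ∧ ∃ q ∈ T, q ∉ A ∧ G.Adj p q := by
  obtain ⟨p⟩ := hT.preconnected ⟨a, ha⟩ ⟨b, hb⟩
  obtain ⟨e, -, hfst, hsnd⟩ := p.exists_boundary_dart (Subtype.val ⁻¹' A) haA hbA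
  exact ⟨e.fst, e.fst.2, hfst, e.snd, e.snd.2, hsnd, e.adj⟩

lemma connected_induce_of_walks (hS : (G.induce S).Connected) (hST : S ⊆ T)
    (h : ∀ z ∈ T, ∃ a ∈ S, ∃ p : G.Walk a z, ∀ w ∈ p.support, w ∈ T) :
    (G.induce T).Connected := by
  obtain ⟨⟨r, hr⟩⟩ := hS.nonempty
  have hreach : ∀ z : T, (G.induce T).Reachable ⟨r, hST hr⟩ z := fun ⟨z, hz⟩ => by
    obtain ⟨a, ha, p, hp⟩ := h z hz
    exact ((hS.preconnected ⟨r, hr⟩ ⟨a, ha⟩).map (induceHomOfLE G hST).toHom).trans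
      ⟨p.induce T hp⟩
  exact (connected_iff_exists_forall_reachable _).2 ⟨_, hreach⟩

/-- `P` is the interior of an ear of `S`: a path outside `S` whose ends are adjacent to two
distinct vertices `u` and `v` of `S`. -/
structure IsEar (G : SimpleGraph V) (S : Set V) (u v : V) (P : G.Walk x y) : Prop where
  isPath : P.IsPath
  notMem : ∀ w ∈ P.support, w ∉ S
  ne : u ≠ v
  left_mem : u ∈ S
  right_mem : v ∈ S
  adj_left : G.Adj u x
  adj_right : G.Adj y v

namespace IsEar

variable {P : G.Walk x y}

lemma exists_walk (hP : IsEar G S u v P) (hz : z ∈ P.support) (hwz : z ≠ w) :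
    ∃ a ∈ S, a ≠ w ∧ ∃ p : G.Walk a z, ∀ b ∈ p.support, (b ∈ S ∨ b ∈ P.support) ∧ b ≠ w := by
  obtain ⟨p, q, hpq⟩ := Walk.mem_support_iff_exists_append.1 hz
  have hsupp : P.support = p.support ++ q.support.tail := by rw [hpq, Walk.support_append]
  have hnodup := hsupp ▸ hP.isPath.support_nodup
  have hq : q.support = z :: q.support.tail := q.cons_tail_support.symm
  have ne : (w ≠ u ∧ w ∉ p.support) ∨ (w ≠ v ∧ w ∉ q.support) := by
    have := hP.notMem w
    have := hP.left_mem
    have := hP.right_mem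
    have := hP.ne
    grind
  rcases ne with ⟨hwu, hw⟩ | ⟨hwv, hw⟩
  · refine ⟨u, hP.left_mem, hwu.symm, .cons hP.adj_left p, fun b hb => ?_⟩
    rw [Walk.support_cons] at hb
    have := hP.left_mem
    grind
  · refine ⟨v, hP.right_mem, hwv.symm, .cons hP.adj_right.symm q.reverse, fun b hb => ?_⟩
    rw [Walk.support_cons, Walk.support_reverse] at hb
    have := hP.right_mem
    grind

end IsEar

lemma IsNonseparable.union_support {P : G.Walk x y} (hS : IsNonseparable G S)
    (hP : IsEar G S u v P) : IsNonseparable G (S ∪ {w | w ∈ P.support}) where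
  connected := by
    refine connected_induce_of_walks hS.connected Set.subset_union_left fun z hz => ?_
    obtain hz | hz := hz
    · exact ⟨z, hz, .nil, by simpa using .inl hz⟩
    · have hzu : z ≠ u := fun h => hP.notMem z hz (h ▸ hP.left_mem)
      obtain ⟨a, ha, -, p, hp⟩ := hP.exists_walk hz hzu
      exact ⟨a, ha, p, fun b hb => (hp b hb).1⟩
  connected_diff w := by
    refine connected_induce_of_walks (hS.connected_diff w)
      (Set.sdiff_subset_sdiff_left Set.subset_union_left) fun z hz => ?_
    obtain ⟨hz | hz, hzw⟩ := hz
    · exact ⟨z, ⟨hz, hzw⟩, .nil, by simpa using ⟨.inl hz, hzw⟩⟩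
    · obtain ⟨a, ha, haw, p, hp⟩ := hP.exists_walk hz hzw
      exact ⟨a, ⟨ha, haw⟩, p, hp⟩

lemma IsNonseparable.exists_isEar (hG : IsNonseparable G Set.univ) (hS : S.Nontrivial)
    (hSne : S ≠ Set.univ) : ∃ (u v x y : V) (P : G.Walk x y), IsEar G S u v P := by
  classical
  obtain ⟨z, hz⟩ := (Set.ne_univ_iff_exists_notMem S).1 hSne
  obtain ⟨s, hs⟩ := hS.nonempty
  obtain ⟨u, -, hu, x, -, hx, hux⟩ := exists_adj_of_connected_induce hG.connected
    (Set.mem_univ s) hs (Set.mem_univ z) hz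
  obtain ⟨t, ht, htu⟩ := hS.exists_ne u
  obtain ⟨y, -, ⟨p, hp⟩, v, hvu, hv, hyv⟩ := exists_adj_of_connected_induce
    (A := {y | ∃ p : G.Walk x y, ∀ w ∈ p.support, w ∉ S}) (a := x) (b := t)
    (hG.connected_diff u) ⟨trivial, hux.ne'⟩ ⟨.nil, by simpa using hx⟩ ⟨trivial, htu⟩
    fun ⟨p, hp⟩ => hp t p.end_mem_support ht
  have hvS : v ∈ S := by
    by_contra hvS
    refine hv ⟨p.concat hyv, fun w hw => ?_⟩
    rw [Walk.support_concat, List.mem_append, List.mem_singleton] at hw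
    exact hw.elim (hp w) (· ▸ hvS)
  exact ⟨u, v, x, y, p.bypass, p.bypass_isPath,
    fun w hw => hp w (p.support_bypass_subset_support hw), Ne.symm hvu.2, hu, hvS, hux, hyv⟩

/-- An ear of `S` with the fewest vertices. -/
structure IsShortestEar (G : SimpleGraph V) (S : Set V) (u v : V) (P : G.Walk x y) : Prop
    extends IsEar G S u v P where
  length_le : ∀ {u' v' x' y' : V} {Q : G.Walk x' y'}, IsEar G S u' v' Q → P.length ≤ Q.length

lemma IsNonseparable.exists_isShortestEar (hG : IsNonseparable G Set.univ) (hS : S.Nontrivial)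
    (hSne : S ≠ Set.univ) : ∃ (u v x y : V) (P : G.Walk x y), IsShortestEar G S u v P := by
  classical
  have hex : ∃ (n : ℕ) (u v x y : V) (P : G.Walk x y), IsEar G S u v P ∧ P.length = n :=
    let ⟨u, v, x, y, P, hP⟩ := hG.exists_isEar hS hSne
    ⟨P.length, u, v, x, y, P, hP, rfl⟩
  obtain ⟨u, v, x, y, P, hP, hlen⟩ := Nat.find_spec hex
  exact ⟨u, v, x, y, P, hP, fun hQ => hlen ▸ Nat.find_min' hex ⟨_, _, _, _, _, hQ, rfl⟩⟩

namespace IsShortestEar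

variable {P : G.Walk x y}

lemma reverse (hP : IsShortestEar G S u v P) : IsShortestEar G S v u P.reverse where
  isPath := hP.isPath.reverse
  notMem w hw := hP.notMem w (by simpa using hw)
  ne := hP.ne.symm
  left_mem := hP.right_mem
  right_mem := hP.left_mem
  adj_left := hP.adj_right.symm
  adj_right := hP.adj_left.symm
  length_le hQ := by simpa using hP.length_le hQ

lemma eq_of_adj_start (hP : IsShortestEar G S u v P) (hxy : x ≠ y) (hz : z ∈ S)
    (hxz : G.Adj x z) : z = u := by
  by_contra hzu
  have hear : IsEar G S u z (.nil : G.Walk x x) :=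
    ⟨.nil, by simpa using hP.notMem x P.start_mem_support, Ne.symm hzu, hP.left_mem, hz,
      hP.adj_left, hxz⟩
  have hlen : P.length = 0 := Nat.le_zero.1 (hP.length_le hear)
  exact hxy (Walk.eq_of_length_eq_zero hlen)

lemma eq_of_adj_snd {h : G.Adj x w} {q : G.Walk w y} (hP : IsShortestEar G S u v (.cons h q))
    (hz : z ∈ S) (hwz : G.Adj w z) : z = v := by
  by_contra hzv
  have hwy : w ≠ y := by
    rintro rfl
    exact hzv (hP.reverse.eq_of_adj_start h.ne' hz hwz)
  have hsub : ∀ b ∈ q.support, b ∈ (Walk.cons h q).support := fun b hb => by simp [hb]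
  by_cases hzu : z = u
  · have hear : IsEar G S u v q :=
      ⟨hP.isPath.of_cons, fun b hb => hP.notMem b (hsub b hb), hP.ne, hP.left_mem, hP.right_mem,
        hzu ▸ hwz.symm, hP.adj_right⟩
    exact absurd (hP.length_le hear) (by simp)
  · have hmem : ∀ b ∈ [x, w], b ∈ (Walk.cons h q).support := by simp
    have hear : IsEar G S u z (.cons h .nil : G.Walk x w) :=
      ⟨by simpa using h.ne, fun b hb => hP.notMem b (hmem b hb), Ne.symm hzu, hP.left_mem, hz,
        hP.adj_left, hwz⟩
    have hlen : q.length = 0 := by simpa using hP.length_le hear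
    exact hwy (Walk.eq_of_length_eq_zero hlen)

end IsShortestEar

/-! ### Ears with a single vertex -/

/-- The private neighbours of `u` with respect to `x`: those which are neither `x` nor adjacent
to `x`. -/
def privateNbrs (G : SimpleGraph V) (x u : V) : Set V := {p | G.Adj u p ∧ p ≠ x ∧ ¬ G.Adj x p}

/-- The properties of the neighbourhood of a vertex `x` such that `G - x` has a Hamiltonian cycle
but `G` has none. -/
structure IsUninsertable (G : SimpleGraph V) (x : V) : Prop where
  clawFree : ClawFree G
  b12Free : B12Free G
  not_adj_of_mem : ∀ {u v p}, G.Adj x u → G.Adj x v → u ≠ v → p ∈ privateNbrs G x u → ¬ G.Adj v p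
  exists_not_adj : ∀ {u v}, G.Adj x u → G.Adj x v → u ≠ v →
    ∃ p ∈ privateNbrs G x u, ∃ q ∈ privateNbrs G x v, ¬ G.Adj p q

lemma isUninsertable_of_hasHamiltonianCycleOn (hcf : ClawFree G) (hB : B12Free G)
    (hG : ¬ HasHamiltonianCycleOn G Set.univ) (hx : HasHamiltonianCycleOn G {x}ᶜ) :
    IsUninsertable G x := by
  have theta {u v : V} (hu : G.Adj x u) (hv : G.Adj x v) (huv : u ≠ v) :
      ∃ (s₁ t₁ s₂ t₂ : V) (T : Theta G u v s₁ t₁ s₂ t₂ x x), T.ear = .nil ∧ T.IsDetached := by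
    obtain ⟨s₁, t₁, s₂, t₂, T, hT⟩ := Theta.exists_of_hasHamiltonianCycleOn hG hx
      (u := u) (v := v) (by simpa using hu.ne') (by simpa using hv.ne') huv .nil .nil (by simp)
      hu.symm hv
    exact ⟨s₁, t₁, s₂, t₂, T, hT, fun h => T.swapEar.not_adj_start_end hG h.symm,
      fun h => T.swap.swapEar.not_adj_start_end hG h.symm,
      fun h => T.flip.swapEar.not_adj_start_end hG h.symm,
      fun h => T.flip.swap.swapEar.not_adj_start_end hG h.symm⟩
  refine ⟨hcf, hB, fun {u v p} hu hv huv hp hvp => ?_, fun {u v} hu hv huv => ?_⟩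
  · obtain ⟨s₁, t₁, s₂, t₂, T, hear, hT⟩ := theta hu hv huv
    exact hp.2.2 (hT.adj_of_notMem_ear hG hcf (by simpa [hear] using hp.2.1) hp.1 hvp)
  · obtain ⟨s₁, t₁, s₂, t₂, T, -, hT⟩ := theta hu hv huv
    have hs₁ := T.arc₁.start_mem_support
    have ht₂ := T.arc₂.end_mem_support
    have hxear := T.ear.start_mem_support
    have hnodup := T.nodup
    exact ⟨s₁, ⟨T.start₁, by grind, hT.start₁⟩, t₂, ⟨T.end₂.symm, by grind, hT.end₂⟩,
      T.not_adj_start_end hG⟩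

namespace IsUninsertable

variable {p q r : V} (h : IsUninsertable G x)
include h

lemma nonempty (hxu : G.Adj x u) (hxv : G.Adj x v) (huv : u ≠ v) : (privateNbrs G x u).Nonempty :=
  let ⟨p, hp, _⟩ := h.exists_not_adj hxu hxv huv
  ⟨p, hp⟩

lemma isClique (hxu : G.Adj x u) : G.IsClique (privateNbrs G x u) := fun p hp q hq hpq => by
  rcases h.clawFree.adj_or_adj_or_adj hxu.symm hp.1 hq.1 hp.2.1.symm hq.2.1.symm hpq
    with hadj | hadj | hadj
  exacts [absurd hadj hp.2.2, absurd hadj hq.2.2, hadj]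

lemma isClique_insert (hxu : G.Adj x u) :
    G.IsClique (insert u (privateNbrs G x u)) :=
  (isClique_insert_of_notMem fun hu => hu.1.ne rfl).2 ⟨h.isClique hxu, fun _ hp => hp.1⟩

lemma not_adj_of_adj_mem (hxu : G.Adj x u) (hp : p ∈ privateNbrs G x u) (hpw : G.Adj p w)
    (hwu : w ≠ u) : ¬ G.Adj x w := fun hxw =>
  h.not_adj_of_mem hxu hxw hwu.symm hp hpw.symm

lemma adj_or_adj_or_adj (hxu : G.Adj x u) (hxv : G.Adj x v) (huv : G.Adj u v)
    (hp : p ∈ privateNbrs G x u) (hr : r ∈ privateNbrs G x v) (hpw : G.Adj p w) (hwu : w ≠ u)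
    (huw : ¬ G.Adj u w) : G.Adj r p ∨ G.Adj r w ∨ G.Adj v w := by
  by_contra! hn
  -- `v`, `u`, `x` is a triangle with the pendant edge `v r` and the path `u`, `p`, `w`.
  exact h.b12Free.false_of_adj huv.symm hxv.symm hxu.symm hr.1 hp.1 hpw
    (h.not_adj_of_mem hxu hxv huv.ne hp) hn.2.2 (h.not_adj_of_mem hxv hxu huv.ne' hr) huw
    hr.2.2 hp.2.2 (h.not_adj_of_adj_mem hxu hp hpw hwu) hn.1 hn.2.1

lemma adj_trans (hxu : G.Adj x u) (hxv : G.Adj x v) (hxw : G.Adj x w) (huv : G.Adj u v)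
    (huw : G.Adj u w) (hvw : v ≠ w) : G.Adj v w := by
  obtain ⟨p, hp⟩ := h.nonempty hxu hxv huv.ne
  rcases h.clawFree.adj_or_adj_or_adj huv huw hp.1 hvw (fun hvp => hp.2.2 (hvp ▸ hxv))
    (fun hwp => hp.2.2 (hwp ▸ hxw)) with hadj | hadj | hadj
  exacts [hadj, absurd hadj (h.not_adj_of_mem hxu hxv huv.ne hp),
    absurd hadj (h.not_adj_of_mem hxu hxw huw.ne hp)]

lemma adj_or_adj (hxu : G.Adj x u) (hxv : G.Adj x v) (hxw : G.Adj x w) (huv : G.Adj u v)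
    (hwu : w ≠ u) (hwv : w ≠ v) : G.Adj w u ∨ G.Adj w v := by
  by_contra! hn
  obtain ⟨p, hp, q, hq, hpq⟩ := h.exists_not_adj hxu hxw hwu.symm
  -- `u`, `x`, `v` is a triangle with the pendant edge `u p` and the path `x`, `w`, `q`.
  exact h.b12Free.false_of_adj hxu.symm huv hxv hp.1 hxw hq.1 (mt Adj.symm hn.1)
    (h.not_adj_of_mem hxw hxu hwu hq) hp.2.2 hq.2.2 (h.not_adj_of_mem hxu hxv huv.ne hp)
    (mt Adj.symm hn.2) (h.not_adj_of_mem hxw hxv hwv hq)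
    (mt Adj.symm (h.not_adj_of_mem hxu hxw hwu.symm hp)) hpq

lemma adj_and_adj (hxu : G.Adj x u) (hxv : G.Adj x v) (hxw : G.Adj x w) (huv : G.Adj u v)
    (hwu : w ≠ u) (hwv : w ≠ v) : G.Adj u w ∧ G.Adj v w := by
  rcases h.adj_or_adj hxu hxv hxw huv hwu hwv with hadj | hadj
  · exact ⟨hadj.symm, h.adj_trans hxu hxv hxw huv hadj.symm hwv.symm⟩
  · exact ⟨h.adj_trans hxv hxu hxw huv.symm hadj.symm hwu.symm, hadj.symm⟩

lemma adj_and_adj_of_adj (hxu : G.Adj x u) (hxv : G.Adj x v) (hxw : G.Adj x w)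
    (huv : u ≠ v) (huw : G.Adj u w) (hvw : v ≠ w) (hp : p ∈ privateNbrs G x u)
    (hq : q ∈ privateNbrs G x v) (hr : r ∈ privateNbrs G x w) (hpq : G.Adj p q) :
    G.Adj p r ∧ G.Adj q r := by
  have huq := h.not_adj_of_mem hxv hxu huv.symm hq
  have hur := h.not_adj_of_mem hxw hxu huw.ne' hr
  have hvp := h.not_adj_of_mem hxu hxv huv hp
  have hvr := h.not_adj_of_mem hxw hxv hvw.symm hr
  have hwq := h.not_adj_of_mem hxv hxw hvw hq
  have hqr : q ≠ r := fun hqr => hvr (hqr ▸ hq.1)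
  have hpr : p ≠ r := fun hpr => hur (hpr ▸ hp.1)
  rcases h.adj_or_adj_or_adj hxu hxw huw hp hr hpq (fun hqu => hq.2.2 (hqu ▸ hxu)) huq
    with hrp | hrq | hwq'
  · rcases h.clawFree.adj_or_adj_or_adj hp.1.symm hpq hrp.symm (fun huq => hq.2.2 (huq ▸ hxu))
      (fun hur => hr.2.2 (hur ▸ hxu)) hqr with hadj | hadj | hadj
    exacts [absurd hadj huq, absurd hadj hur, ⟨hrp.symm, hadj⟩]
  · rcases h.clawFree.adj_or_adj_or_adj hq.1.symm hpq.symm hrq.symm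
      (fun hvp => hp.2.2 (hvp ▸ hxv)) (fun hvr => hr.2.2 (hvr ▸ hxv)) hpr with hadj | hadj | hadj
    exacts [absurd hadj hvp, absurd hadj hvr, ⟨hadj, hrq.symm⟩]
  · exact absurd hwq' hwq

lemma not_adj_of_isTriangle (hxu : G.Adj x u) (hxv : G.Adj x v) (hxw : G.Adj x w)
    (huv : G.Adj u v) (huw : G.Adj u w) (hvw : G.Adj v w) (hp : p ∈ privateNbrs G x u)
    (hq : q ∈ privateNbrs G x v) : ¬ G.Adj p q := fun hpq => by
  obtain ⟨p₀, hp₀, q₀, hq₀, hpq₀⟩ := h.exists_not_adj hxu hxv huv.ne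
  obtain ⟨r, hr⟩ := h.nonempty hxw hxu huw.ne'
  have hpr := (h.adj_and_adj_of_adj hxu hxv hxw huv.ne huw hvw.ne hp hq hr hpq).1
  have hrq₀ := (h.adj_and_adj_of_adj hxu hxw hxv huw.ne huv hvw.ne' hp hr hq₀ hpr).2
  exact hpq₀ (h.adj_and_adj_of_adj hxw hxv hxu hvw.ne' huw.symm huv.ne' hr hq₀ hp₀ hrq₀).2.symm

lemma exists_adj_of_mem (hG : IsNonseparable G Set.univ) (hxu : G.Adj x u) (hxv : G.Adj x v)
    (huv : u ≠ v) : ∃ p ∈ privateNbrs G x u, ∃ w, G.Adj p w ∧ w ≠ u ∧ ¬ G.Adj u w ∧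
      w ≠ x ∧ ¬ G.Adj x w := by
  obtain ⟨p₀, hp₀⟩ := h.nonempty hxu hxv huv
  have hv : v ∉ privateNbrs G x u := fun hv => hv.2.2 hxv
  obtain ⟨p, -, hp, w, ⟨-, hwu⟩, hw, hpw⟩ := exists_adj_of_connected_induce (hG.connected_diff u)
    ⟨trivial, hp₀.1.ne'⟩ hp₀ ⟨trivial, huv.symm⟩ hv
  have hwx : w ≠ x := fun hwx => hp.2.2 (hwx ▸ hpw.symm)
  have hxw : ¬ G.Adj x w := h.not_adj_of_adj_mem hxu hp hpw hwu
  exact ⟨p, hp, w, hpw, hwu, fun huw => hw ⟨huw, hwx, hxw⟩, hwx, hxw⟩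

lemma eq_or_eq_of_adj_of_adj (hG : IsNonseparable G Set.univ) (hxu : G.Adj x u) (hxv : G.Adj x v)
    (huv : G.Adj u v) (hxw : G.Adj x w) : w = u ∨ w = v := by
  by_contra! ⟨hwu, hwv⟩
  obtain ⟨huw, hvw⟩ := h.adj_and_adj hxu hxv hxw huv hwu hwv
  obtain ⟨p, hp, y, hpy, hyu, huy, hyx, hxy⟩ := h.exists_adj_of_mem hG hxu hxv huv.ne
  obtain ⟨q, hq⟩ := h.nonempty hxv hxu huv.ne'
  obtain ⟨r, hr⟩ := h.nonempty hxw hxu hwu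
  have hpq : ¬ G.Adj p q := h.not_adj_of_isTriangle hxu hxv hxw huv huw hvw hp hq
  have hpr : ¬ G.Adj p r := h.not_adj_of_isTriangle hxu hxw hxv huw huv hvw.symm hp hr
  have hqr : ¬ G.Adj q r := h.not_adj_of_isTriangle hxv hxw hxu hvw huv.symm huw.symm hq hr
  have hqy : G.Adj q y := by
    rcases h.adj_or_adj_or_adj hxu hxv huv hp hq hpy hyu huy with hadj | hadj | hvy
    exacts [absurd hadj.symm hpq, hadj, absurd hpy
      (h.not_adj_of_isTriangle hxu hxv hxw huv huw hvw hp ⟨hvy, hyx, hxy⟩)]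
  have hry : G.Adj r y := by
    rcases h.adj_or_adj_or_adj hxu hxw huw hp hr hpy hyu huy with hadj | hadj | hwy
    exacts [absurd hadj.symm hpr, hadj, absurd hpy
      (h.not_adj_of_isTriangle hxu hxw hxv huw huv hvw.symm hp ⟨hwy, hyx, hxy⟩)]
  have hne {a b c : V} (hxa : G.Adj x a) (hxb : G.Adj x b) (hab : a ≠ b)
      (hc : c ∈ privateNbrs G x a) {d : V} (hd : d ∈ privateNbrs G x b) : c ≠ d := fun hcd =>
    h.not_adj_of_mem hxa hxb hab hc (hcd ▸ hd.1)
  rcases h.clawFree.adj_or_adj_or_adj hpy.symm hqy.symm hry.symm (hne hxu hxv huv.ne hp hq)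
    (hne hxu hxw huw.ne hp hr) (hne hxv hxw hvw.ne hq hr) with hadj | hadj | hadj
  exacts [hpq hadj, hpr hadj, hqr hadj]

lemma adj_iff (hG : IsNonseparable G Set.univ) (hxu : G.Adj x u) (hxv : G.Adj x v)
    (huv : u ≠ v) : G.Adj x w ↔ w = u ∨ w = v := by
  refine ⟨fun hxw => ?_, by rintro (rfl | rfl) <;> assumption⟩
  by_contra! ⟨hwu, hwv⟩
  rcases h.clawFree.adj_or_adj_or_adj hxu hxv hxw huv hwu.symm hwv.symm with hadj | hadj | hadj
  · exact (h.eq_or_eq_of_adj_of_adj hG hxu hxv hadj hxw).elim hwu hwv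
  · exact (h.eq_or_eq_of_adj_of_adj hG hxu hxw hadj hxv).elim huv.symm hwv.symm
  · exact (h.eq_or_eq_of_adj_of_adj hG hxv hxw hadj hxu).elim huv hwu.symm

end IsUninsertable

/-- The vertices other than `x` and its two neighbours `u` and `v` which are adjacent to none of
these three. -/
def farVerts (G : SimpleGraph V) (x u v : V) : Set V :=
  {w | w ≠ x ∧ ¬ G.Adj x w ∧ ¬ G.Adj u w ∧ ¬ G.Adj v w}

lemma farVerts_comm (G : SimpleGraph V) (x u v : V) : farVerts G x u v = farVerts G x v u := by
  ext w
  simp only [farVerts, Set.mem_ofPred_eq, and_comm (a := ¬ G.Adj u w)]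

/-- `x` has exactly two neighbours `u` and `v`, and these or some of their private neighbours are
adjacent. -/
structure IsJoined (G : SimpleGraph V) (x u v : V) : Prop extends IsUninsertable G x where
  ne : u ≠ v
  adj_iff : ∀ {w}, G.Adj x w ↔ w = u ∨ w = v
  adj_or_exists_adj : G.Adj u v ∨ ∃ p ∈ privateNbrs G x u, ∃ q ∈ privateNbrs G x v, G.Adj p q

namespace IsJoined

variable {p q : V} (h : IsJoined G x u v)
include h

lemma symm : IsJoined G x v u where
  __ := h.toIsUninsertable
  ne := h.ne.symm
  adj_iff := h.adj_iff.trans or_comm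
  adj_or_exists_adj := h.adj_or_exists_adj.imp Adj.symm
    fun ⟨p, hp, q, hq, hpq⟩ => ⟨q, hq, p, hp, hpq.symm⟩

lemma adj_left : G.Adj x u := h.adj_iff.2 (.inl rfl)

lemma adj_right : G.Adj x v := h.adj_iff.2 (.inr rfl)

lemma not_adj_of_mem_left (hp : p ∈ privateNbrs G x u) : ¬ G.Adj v p :=
  h.not_adj_of_mem h.adj_left h.adj_right h.ne hp

lemma adj_of_adj_of_adj (hw : w ∈ farVerts G x u v) (hp : p ∈ privateNbrs G x u)
    (hq : q ∈ privateNbrs G x v) (hwp : G.Adj w p) (hpq : G.Adj p q) : G.Adj w q := by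
  rcases h.clawFree.adj_or_adj_or_adj hp.1.symm hwp.symm hpq (fun huw => hw.2.1 (huw ▸ h.adj_left))
    (fun huq => hq.2.2 (huq ▸ h.adj_left)) (fun hwq => hw.2.2.2 (hwq ▸ hq.1))
    with huw | huq | hadj
  exacts [absurd huw hw.2.2.1, absurd huq (h.symm.not_adj_of_mem_left hq), hadj]

lemma adj_of_not_adj (huv : ¬ G.Adj u v) (hw : w ∈ farVerts G x u v)
    (hp : p ∈ privateNbrs G x u) (hq : q ∈ privateNbrs G x u) (hwp : G.Adj w p) :
    G.Adj w q := by
  by_contra hwq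
  have hpq : p ≠ q := by
    rintro rfl
    exact hwq hwp
  -- `p`, `u`, `q` is a triangle with the pendant edge `p w` and the path `u`, `x`, `v`.
  exact h.b12Free.false_of_adj hp.1.symm (h.isClique h.adj_left hp hq hpq) hq.1 hwp.symm
    h.adj_left.symm h.adj_right (mt Adj.symm hp.2.2) (mt Adj.symm (h.not_adj_of_mem_left hp))
    hw.2.2.1 huv (mt Adj.symm hwq) (mt Adj.symm hq.2.2) (mt Adj.symm (h.not_adj_of_mem_left hq))
    (mt Adj.symm hw.2.1) (mt Adj.symm hw.2.2.2)

lemma adj_of_mem_right (hw : w ∈ farVerts G x u v) (hp : p ∈ privateNbrs G x u)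
    (hwp : G.Adj w p) (hq : q ∈ privateNbrs G x v) : G.Adj w q := by
  by_cases huv : G.Adj u v
  · rcases h.adj_or_adj_or_adj h.adj_left h.adj_right huv hp hq hwp.symm
      (fun hwu => hw.2.1 (hwu ▸ h.adj_left)) hw.2.2.1 with hqp | hqw | hvw
    exacts [h.adj_of_adj_of_adj hw hp hq hwp hqp.symm, hqw.symm, absurd hvw hw.2.2.2]
  · obtain ⟨p₀, hp₀, q₀, hq₀, hpq₀⟩ := h.adj_or_exists_adj.resolve_left huv
    have hwp₀ := h.adj_of_not_adj huv hw hp hp₀ hwp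
    have hwq₀ := h.adj_of_adj_of_adj hw hp₀ hq₀ hwp₀ hpq₀
    exact h.symm.adj_of_not_adj (mt Adj.symm huv) (farVerts_comm G x u v ▸ hw) hq₀ hq hwq₀

lemma adj_of_mem_left (hw : w ∈ farVerts G x u v) (hp : p ∈ privateNbrs G x u)
    (hwp : G.Adj w p) (hq : q ∈ privateNbrs G x u) : G.Adj w q := by
  obtain ⟨r, hr⟩ := h.nonempty h.adj_right h.adj_left h.ne.symm
  exact h.symm.adj_of_mem_right (farVerts_comm G x u v ▸ hw) hr (h.adj_of_mem_right hw hp hwp hr) hq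

lemma mem_farVerts_of_adj (hb : b ∈ farVerts G x u v) (hp : p ∈ privateNbrs G x u)
    (hbp : ¬ G.Adj b p) (hab : G.Adj a b) : a ∈ farVerts G x u v := by
  have hax : a ≠ x := by
    rintro rfl
    exact hb.2.1 hab
  have hxa : ¬ G.Adj x a := fun hxa => by
    obtain rfl | rfl := h.adj_iff.1 hxa
    exacts [hb.2.2.1 hab, hb.2.2.2 hab]
  exact ⟨hax, hxa, fun hua => hbp (h.adj_of_mem_left hb ⟨hua, hax, hxa⟩ hab.symm hp),
    fun hva => hbp (h.symm.adj_of_mem_right (farVerts_comm G x u v ▸ hb) ⟨hva, hax, hxa⟩ hab.symm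
      hp)⟩

lemma adj_of_mem_farVerts (hG : IsNonseparable G Set.univ) (hw : w ∈ farVerts G x u v)
    (hp : p ∈ privateNbrs G x u) : G.Adj w p := by
  obtain ⟨p₀, hp₀, q₀, hq₀, hpq₀⟩ := h.exists_not_adj h.adj_left h.adj_right h.ne
  by_contra hwp
  obtain ⟨a, -, ha, b, -, hb, hab⟩ := exists_adj_of_connected_induce
    (A := {b | b ∈ farVerts G x u v → G.Adj b p₀}) hG.connected (Set.mem_univ p₀)
    (fun h => absurd hp₀.1 h.2.2.1) (Set.mem_univ w)
    fun hw' => hwp (h.adj_of_mem_left hw hp₀ (hw' hw) hp)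
  obtain ⟨hbfar, hbp₀⟩ := Classical.not_imp.1 hb
  have hbq₀ : ¬ G.Adj b q₀ := fun hbq₀ =>
    hbp₀ (h.symm.adj_of_mem_right (farVerts_comm G x u v ▸ hbfar) hq₀ hbq₀ hp₀)
  have hafar : a ∈ farVerts G x u v := h.mem_farVerts_of_adj hbfar hp₀ hbp₀ hab
  have hap₀ : G.Adj a p₀ := ha hafar
  have haq₀ : G.Adj a q₀ := h.adj_of_mem_right hafar hp₀ hap₀ hq₀
  rcases h.clawFree.adj_or_adj_or_adj hap₀ haq₀ hab
    (fun hpq => h.not_adj_of_mem_left hp₀ (hpq ▸ hq₀.1)) (fun hpb => hbfar.2.2.1 (hpb ▸ hp₀.1))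
    (fun hqb => hbfar.2.2.2 (hqb ▸ hq₀.1)) with hadj | hadj | hadj
  exacts [hpq₀ hadj, hbp₀ hadj.symm, hbq₀ hadj.symm]

lemma isClique_farVerts (hG : IsNonseparable G Set.univ) : G.IsClique (farVerts G x u v) :=
  fun w hw w' hw' hww' => by
    obtain ⟨p, hp⟩ := h.nonempty h.adj_left h.adj_right h.ne
    rcases h.clawFree.adj_or_adj_or_adj hp.1.symm (h.adj_of_mem_farVerts hG hw hp).symm
      (h.adj_of_mem_farVerts hG hw' hp).symm (fun huw => hw.2.1 (huw ▸ h.adj_left))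
      (fun huw => hw'.2.1 (huw ▸ h.adj_left)) hww' with hadj | hadj | hadj
    exacts [absurd hadj hw.2.2.1, absurd hadj hw'.2.2.1, hadj]

lemma compl_singleton_eq : ({x}ᶜ : Set V) = insert u (privateNbrs G x u) ∪
    (farVerts G x u v ∪ insert v (privateNbrs G x v)) := by
  ext w
  have := h.adj_left.ne
  have := h.adj_right.ne
  have := h.adj_iff (w := w)
  simp only [Set.mem_compl_iff, Set.mem_singleton_iff, Set.mem_union, Set.mem_insert_iff,
    farVerts, privateNbrs, Set.mem_ofPred_eq]
  grind

lemma disjoint_insert : Disjoint (insert u (privateNbrs G x u))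
    (farVerts G x u v ∪ insert v (privateNbrs G x v)) := by
  have hxu := h.adj_left
  have hxv := h.adj_right
  rw [Set.disjoint_left]
  rintro w (rfl | hw) (hw' | rfl | hw')
  exacts [hw'.2.1 hxu, h.ne rfl, hw'.2.2 hxu, hw'.2.2.1 hw.1, hw.2.2 hxv,
    h.not_adj_of_mem_left hw hw'.1]

lemma exists_hasHamiltonianPathOn [Finite V] (hG : IsNonseparable G Set.univ) :
    ∃ p ∈ privateNbrs G x u, ∃ w, G.Adj p w ∧
      HasHamiltonianPathOn G (farVerts G x u v ∪ insert v (privateNbrs G x v)) w v := by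
  rcases (farVerts G x u v).eq_empty_or_nonempty with hfar | ⟨w, hw⟩
  · obtain ⟨p, hp, q, hpq, -, huq, hqx, hxq⟩ := h.exists_adj_of_mem hG h.adj_left h.adj_right h.ne
    have hvq : G.Adj v q := by
      by_contra hvq
      exact hfar.subset (show q ∈ farVerts G x u v from ⟨hqx, hxq, huq, hvq⟩)
    refine ⟨p, hp, q, hpq, ?_⟩
    rw [hfar, Set.empty_union]
    exact .of_isClique (h.isClique_insert h.adj_right) (.inr ⟨hvq, hqx, hxq⟩)
      (.inl rfl) hvq.ne'
  · obtain ⟨p, hp⟩ := h.nonempty h.adj_left h.adj_right h.ne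
    obtain ⟨q, hq⟩ := h.nonempty h.adj_right h.adj_left h.ne.symm
    have hwq {w q : V} (hw : w ∈ farVerts G x u v) (hq : q ∈ privateNbrs G x v) : G.Adj w q :=
      h.symm.adj_of_mem_farVerts hG (farVerts_comm G x u v ▸ hw) hq
    have hclique : G.IsClique (farVerts G x u v ∪ privateNbrs G x v) := by
      rintro a (ha | ha) b (hb | hb) hab
      exacts [h.isClique_farVerts hG ha hb hab, hwq ha hb, (hwq hb ha).symm,
        h.isClique h.adj_right ha hb hab]
    have hv : v ∉ farVerts G x u v ∪ privateNbrs G x v := by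
      rintro (hv | hv)
      exacts [hv.2.1 h.adj_right, hv.2.2 h.adj_right]
    refine ⟨p, hp, w, (h.adj_of_mem_farVerts hG hw hp).symm, ?_⟩
    rw [Set.insert_eq, Set.union_comm {v}, ← Set.union_assoc]
    exact (HasHamiltonianPathOn.of_isClique hclique (.inl hw) (.inr hq) (hwq hw hq).ne).append
      (.singleton G v) (Set.disjoint_singleton_right.2 hv) hq.1.symm

lemma hasHamiltonianPathOn [Finite V] (hG : IsNonseparable G Set.univ) :
    HasHamiltonianPathOn G {x}ᶜ u v := by
  obtain ⟨p, hp, w, hpw, hpath⟩ := h.exists_hasHamiltonianPathOn hG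
  have hu : HasHamiltonianPathOn G (insert u (privateNbrs G x u)) u p :=
    .of_isClique (h.isClique_insert h.adj_left) (.inl rfl) (.inr hp) hp.1.ne
  rw [h.compl_singleton_eq]
  exact hu.append hpath h.disjoint_insert hpw

end IsJoined

lemma three_le_level {u v : S} (hS : (G.induce S).Connected) (huv : u ≠ v) (hadj : ¬ G.Adj u v)
    (hcommon : ∀ z ∈ S, G.Adj u z → ¬ G.Adj z v) : 3 ≤ level G u v := by
  have h₀ : level G u v ≠ 0 := mt hS.dist_eq_zero_iff.1 huv
  have h₁ : level G u v ≠ 1 := mt adj_of_level_eq_one hadj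
  have h₂ : level G u v ≠ 2 := fun h => by
    obtain ⟨z, hzv, hz⟩ := exists_adj_of_dist_eq_succ h
    exact hcommon z z.2 (adj_of_level_eq_one hz) hzv
  lia

namespace IsUninsertable

variable (h : IsUninsertable G x) (huv : u ≠ v) (hadj : ∀ {w}, G.Adj x w ↔ w = u ∨ w = v)
include h huv hadj

lemma isTail (hS : (G.induce {x}ᶜ).Connected) (hu : u ∈ ({x}ᶜ : Set V)) (hv : v ∈ ({x}ᶜ : Set V))
    (huv' : ¬ G.Adj u v) (hpq : ∀ p ∈ privateNbrs G x u, ∀ q ∈ privateNbrs G x v, ¬ G.Adj p q) :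
    IsTail G {x}ᶜ ⟨u, hu⟩ x v := by
  have hxu : G.Adj x u := hadj.2 (.inl rfl)
  have hxv : G.Adj x v := hadj.2 (.inr rfl)
  have hlevel : 3 ≤ level G ⟨u, hu⟩ ⟨v, hv⟩ :=
    three_le_level hS (by simpa using huv) huv' fun z hz huz hzv => by
      have hxz : ¬ G.Adj x z := fun hxz => by
        obtain rfl | rfl := hadj.1 hxz
        exacts [huz.ne rfl, hzv.ne rfl]
      exact h.not_adj_of_mem hxu hxv huv ⟨huz, hz, hxz⟩ hzv.symm
  have hlevel' : level G ⟨u, hu⟩ ⟨v, hv⟩ ≠ 3 := fun hthree => by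
    obtain ⟨q, hqv, hq⟩ := exists_adj_of_dist_eq_succ hthree
    obtain ⟨p, hpq', hp⟩ := exists_adj_of_dist_eq_succ hq
    have not_adj {y : ({x}ᶜ : Set V)} (h₀ : level G ⟨u, hu⟩ y ≠ 0) (h₃ : level G ⟨u, hu⟩ y ≠ 3) :
        ¬ G.Adj x y := fun hxy => by
      obtain rfl | rfl := hadj.1 hxy
      exacts [h₀ dist_self, h₃ hthree]
    exact hpq p ⟨adj_of_level_eq_one hp, p.2, not_adj (by lia) (by lia)⟩
      q ⟨hqv.symm, q.2, not_adj (by lia) (by lia)⟩ hpq'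
  refine ⟨fun hx => hx rfl, hxu.symm, hxv, fun y hy₁ hy₃ hxy => ?_, fun y hy => ?_⟩
  · obtain rfl | rfl := hadj.1 hxy
    · simp at hy₁
    · lia
  · exact mt Adj.symm (not_adj_of_level_add_one_lt (z := ⟨v, hv⟩) ⟨u, hu⟩ (by lia))

lemma hasHamiltonianPathOn [Finite V] (hG : IsNonseparable G Set.univ) :
    HasHamiltonianPathOn G {x}ᶜ u v := by
  by_cases hjoined : G.Adj u v ∨ ∃ p ∈ privateNbrs G x u, ∃ q ∈ privateNbrs G x v, G.Adj p q
  · exact IsJoined.hasHamiltonianPathOn ⟨h, huv, hadj, hjoined⟩ hG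
  push Not at hjoined
  have hxu : G.Adj x u := hadj.2 (.inl rfl)
  have hxv : G.Adj x v := hadj.2 (.inr rfl)
  have hS : (G.induce {x}ᶜ).Connected := Set.compl_eq_univ_sdiff {x} ▸ hG.connected_diff x
  have hnbrs : {w | w ∈ ({x}ᶜ : Set V) ∧ G.Adj v w} ⊆ privateNbrs G x v := fun w hw =>
    ⟨hw.2, hw.1, fun hxw => by
      obtain rfl | rfl := hadj.1 hxw
      exacts [hjoined.1 hw.2.symm, hw.2.ne rfl]⟩
  exact (h.isTail huv hadj hS hxu.ne' hxv.ne' hjoined.1 hjoined.2).hasHamiltonianPathOn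
    (v := ⟨v, hxv.ne'⟩) hS h.clawFree h.b12Free (Subtype.coe_ne_coe.1 huv)
    ((h.isClique hxv).subset hnbrs)

end IsUninsertable

lemma hasHamiltonianCycleOn_univ_of_compl_singleton [Finite V] (hcf : ClawFree G) (hB : B12Free G)
    (hG : IsNonseparable G Set.univ) (hx : HasHamiltonianCycleOn G {x}ᶜ) (hxu : G.Adj x u)
    (hxv : G.Adj x v) (huv : u ≠ v) : HasHamiltonianCycleOn G Set.univ := by
  by_contra hham
  have h := isUninsertable_of_hasHamiltonianCycleOn hcf hB hham hx
  have hpath := h.hasHamiltonianPathOn huv (h.adj_iff hG hxu hxv huv) hG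
  have hx' : HasHamiltonianPathOn G ({x}ᶜ)ᶜ x x := by
    rw [compl_compl]
    exact .singleton G x
  exact hham (hpath.hasHamiltonianCycleOn_univ hx' hxv.symm hxu)

/-! ### Ears with at least two vertices -/

namespace IsShortestEar

variable {P : G.Walk x y} (hP : IsShortestEar G S u v P) (hxy : x ≠ y)
include hP hxy

lemma isClique_right (hcf : ClawFree G) : G.IsClique {w | w ∈ S ∧ G.Adj v w} := by
  have hy : y ∉ S := hP.notMem y P.end_mem_support
  have not_adj {a : V} (ha : a ∈ S) (hva : G.Adj v a) : ¬ G.Adj y a := fun hya =>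
    hva.ne (hP.reverse.eq_of_adj_start hxy.symm ha hya).symm
  rintro a ⟨ha, hva⟩ b ⟨hb, hvb⟩ hab
  rcases hcf.adj_or_adj_or_adj hP.adj_right.symm hva hvb (by grind) (by grind) hab
    with hadj | hadj | hadj
  exacts [absurd hadj (not_adj ha hva), absurd hadj (not_adj hb hvb), hadj]

lemma exists_isTail (hlevel : 3 ≤ level G ⟨u, hP.left_mem⟩ ⟨v, hP.right_mem⟩) :
    ∃ w, IsTail G S ⟨u, hP.left_mem⟩ x w := by
  cases P with
  | nil => exact absurd rfl hxy
  | @cons _ w _ hxw q =>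
    refine ⟨w, hP.notMem x (by simp), hP.adj_left, hxw, fun z hz _ hxz => ?_, fun z hz hwz => ?_⟩
    · obtain rfl : z = ⟨u, hP.left_mem⟩ := Subtype.ext (hP.eq_of_adj_start hxy z.2 hxz)
      simp at hz
    · obtain rfl : z = ⟨v, hP.right_mem⟩ := Subtype.ext (hP.eq_of_adj_snd z.2 hwz)
      lia

lemma exists_theta_isDetached (hG : ¬ HasHamiltonianCycleOn G Set.univ)
    (hS : HasHamiltonianCycleOn G S) (hPS : ∀ w, w ∈ P.support ↔ w ∈ Sᶜ) :
    ∃ (s₁ t₁ s₂ t₂ : V) (T : Theta G u v s₁ t₁ s₂ t₂ x y), T.ear = P ∧ T.IsDetached := by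
  obtain ⟨s₁, t₁, s₂, t₂, T, rfl⟩ := Theta.exists_of_hasHamiltonianCycleOn hG hS hP.left_mem
    hP.right_mem hP.ne P hP.isPath hPS hP.adj_left hP.adj_right
  have mem {z : V} (hz : z ∈ T.arc₁.support ∨ z ∈ T.arc₂.support) : z ∈ S := by
    have := T.nodup
    have := hPS z
    grind
  have hx {z : V} (hz : z ∈ S) (huz : G.Adj u z) : ¬ G.Adj x z := fun hxz =>
    huz.ne (hP.eq_of_adj_start hxy hz hxz).symm
  have hy {z : V} (hz : z ∈ S) (hzv : G.Adj z v) : ¬ G.Adj y z := fun hyz =>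
    hzv.ne (hP.reverse.eq_of_adj_start hxy.symm hz hyz)
  exact ⟨s₁, t₁, s₂, t₂, T, rfl, hx (mem (.inl T.arc₁.start_mem_support)) T.start₁,
    hx (mem (.inr T.arc₂.start_mem_support)) T.start₂,
    hy (mem (.inl T.arc₁.end_mem_support)) T.end₁, hy (mem (.inr T.arc₂.end_mem_support)) T.end₂⟩

lemma hasHamiltonianCycleOn_univ [Finite V] (hcf : ClawFree G) (hB : B12Free G)
    (hconn : (G.induce S).Connected) (hS : HasHamiltonianCycleOn G S)
    (hPS : ∀ w, w ∈ P.support ↔ w ∈ Sᶜ) : HasHamiltonianCycleOn G Set.univ := by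
  by_contra hG
  obtain ⟨s₁, t₁, s₂, t₂, T, rfl, hT⟩ := hP.exists_theta_isDetached hxy hG hS hPS
  have hxv : ¬ G.Adj x v := fun hxv =>
    hP.ne (hP.eq_of_adj_start hxy hP.right_mem hxv).symm
  have hlevel := three_le_level (u := ⟨u, hP.left_mem⟩) (v := ⟨v, hP.right_mem⟩) hconn
    (by simpa using hP.ne) (hT.not_adj hG hcf hxv) fun z hz huz hzv =>
      have hxz : G.Adj x z := hT.adj_of_notMem_ear hG hcf (mt (hP.notMem z) (by simpa using hz))
        huz hzv.symm
      huz.ne (hP.eq_of_adj_start hxy hz hxz).symm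
  obtain ⟨w, hw⟩ := hP.exists_isTail hxy hlevel
  have hpath := hw.hasHamiltonianPathOn (v := ⟨v, hP.right_mem⟩) hconn hcf hB
    (by simpa using hP.ne) (hP.isClique_right hxy hcf)
  exact hG (hpath.hasHamiltonianCycleOn_univ
    (HasHamiltonianPathOn.symm ⟨T.ear, hP.isPath, hPS⟩) hP.adj_right.symm hP.adj_left.symm)

end IsShortestEar

/-! ### Induction along ears -/

lemma IsNonseparable.nontrivial (hS : IsNonseparable G S) : S.Nontrivial := by
  obtain ⟨⟨u, hu⟩⟩ := hS.connected.nonempty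
  obtain ⟨⟨v, hv, hvu⟩⟩ := (hS.connected_diff u).nonempty
  exact ⟨v, hv, u, hu, hvu⟩

lemma isNonseparable_pair (hab : G.Adj a b) : IsNonseparable G {a, b} where
  connected := induce_pair_connected_of_adj hab
  connected_diff w := by
    have of_singleton (z : V) : (G.induce {z}).Connected := ⟨.of_subsingleton⟩
    by_cases hwa : w = a
    · rw [hwa, Set.pair_sdiff_left hab.ne]
      exact of_singleton b
    by_cases hwb : w = b
    · rw [hwb, Set.pair_sdiff_right hab.ne]
      exact of_singleton a
    · rw [Set.sdiff_singleton_eq_self (by simp [hwa, hwb])]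
      exact induce_pair_connected_of_adj hab

lemma connected_induce_induce {T : Set S} (h : (G.induce (Subtype.val '' T)).Connected) :
    ((G.induce S).induce T).Connected := by
  let f : G.induce (Subtype.val '' T) →g (G.induce S).induce T :=
    ⟨fun w => ⟨⟨w, Subtype.coe_image_subset S T w.2⟩, by obtain ⟨_, z, hz, rfl⟩ := w; exact hz⟩, id⟩
  exact h.map f fun z => ⟨⟨z, _, z.2, rfl⟩, rfl⟩

lemma IsNonseparable.induce (hS : IsNonseparable G S) :
    IsNonseparable (G.induce S) Set.univ where
  connected := (induceUnivIso _).connected_iff.2 hS.connected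
  connected_diff w := by
    refine connected_induce_induce ?_
    rw [Set.image_sdiff Subtype.val_injective, Set.image_singleton, Subtype.coe_image_univ]
    exact hS.connected_diff w

lemma IsNonseparable.exists_isShortestEar_compl [Finite V] (hG : IsNonseparable G Set.univ)
    (hab : G.Adj a b) (hne : ({a, b} : Set V) ≠ Set.univ) :
    ∃ (S : Set V) (u v x y : V) (P : G.Walk x y), IsNonseparable G S ∧ IsShortestEar G S u v P ∧
      ∀ w, w ∈ P.support ↔ w ∈ Sᶜ := by
  obtain ⟨S, hSmax⟩ := {S : Set V | IsNonseparable G S ∧ S ≠ Set.univ}.toFinite.exists_maximal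
    ⟨_, isNonseparable_pair hab, hne⟩
  obtain ⟨hS, hSne⟩ := hSmax.prop
  obtain ⟨u, v, x, y, P, hP⟩ := hG.exists_isShortestEar hS.nontrivial hSne
  refine ⟨S, u, v, x, y, P, hS, hP, fun w => ⟨hP.notMem w, fun hw => ?_⟩⟩
  have huniv : S ∪ {w | w ∈ P.support} = Set.univ := by
    by_contra hunion
    have hle := hSmax.le_of_ge ⟨hS.union_support hP.toIsEar, hunion⟩ Set.subset_union_left
    exact hP.notMem x P.start_mem_support (hle (.inr P.start_mem_support))
  exact (huniv.ge (Set.mem_univ w)).resolve_left hw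

theorem IsNonseparable.hasHamiltonianCycleOn_univ [Finite V] (hG : IsNonseparable G Set.univ)
    (hcf : ClawFree G) (hB : B12Free G) : HasHamiltonianCycleOn G Set.univ := by
  induction hn : Nat.card V using Nat.strong_induction_on generalizing V with
  | _ n ih =>
  obtain ⟨r, hr, s, hs, hrs⟩ := hG.nontrivial
  obtain ⟨a, -, -, b, -, -, hab⟩ := exists_adj_of_connected_induce (A := {r}) hG.connected
    hr rfl hs hrs.symm
  by_cases hpair : ({a, b} : Set V) = Set.univ
  · rw [← hpair]
    exact ((HasHamiltonianPathOn.singleton G a).append (.singleton G b) (by simpa using hab.ne)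
      hab).hasHamiltonianCycleOn hab.symm
  obtain ⟨S, u, v, x, y, P, hS, hP, hPS⟩ := hG.exists_isShortestEar_compl hab hpair
  have hcard : Nat.card S < n := hn ▸ Set.ncard_lt_card
    ((Set.ne_univ_iff_exists_notMem S).2 ⟨x, hP.notMem x P.start_mem_support⟩)
  have hSham : HasHamiltonianCycleOn G S :=
    .of_induce (ih _ hcard hS.induce (hcf.induce S) (hB.induce S) rfl)
  by_cases hxy : x = y
  · subst hxy
    obtain rfl : P = .nil := (Walk.isPath_iff_nil.1 hP.isPath).eq_nil
    obtain rfl : S = {x}ᶜ := by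
      ext w
      simpa [not_iff_not] using (hPS w).not.symm
    exact hasHamiltonianCycleOn_univ_of_compl_singleton hcf hB hG hSham hP.adj_left.symm
      hP.adj_right hP.ne
  · exact hP.hasHamiltonianCycleOn_univ hxy hcf hB hS.connected hSham hPS

lemma isNonseparable_univ_of_twoConnected [Fintype V] (h : TwoConnected G) :
    IsNonseparable G Set.univ where
  connected := by
    have : Nonempty V := Fintype.card_pos_iff.1 (by have := h.1; lia)
    refine (induceUnivIso G).connected_iff.2 ⟨fun a b => ?_⟩
    classical
    have hcard : ({a, b} : Finset V).card < (Finset.univ : Finset V).card :=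
      Finset.card_le_two.trans_lt h.1
    obtain ⟨c, -, hc⟩ := Finset.exists_mem_notMem_of_card_lt_card hcard
    exact ((h.2 c).preconnected ⟨a, by grind⟩ ⟨b, by grind⟩).map (Embedding.induce {c}ᶜ).toHom
  connected_diff w := Set.compl_eq_univ_sdiff {w} ▸ h.2 w

end Bedrossian

/-- **Theorem (Bedrossian; Statement 16).** Every 2-connected `{K_{1,3}, B_{1,2}}`-free
graph has a Hamiltonian cycle. -/
theorem stmt16 {V : Type*} [Fintype V] [DecidableEq V] (G : SimpleGraph V)
    (h2c : TwoConnected G)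
    (hK13 : ¬ ContainsInduced G K13) (hB12 : ¬ ContainsInduced G (Bgraph 2)) :
    HasHamiltonianCycle G := by
  have hG : Bedrossian.IsNonseparable G Set.univ :=
    Bedrossian.isNonseparable_univ_of_twoConnected h2c
  exact (hG.hasHamiltonianCycleOn_univ hK13 hB12).hasHamiltonianCycle h2c.1
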